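/- Let n ≥ 1, let p₀, p₁ : Fin n → ℝ be probability distributions (nonnegative entries summing to 1), and let ξ ∈ [0,1]. Setting F = (∑ₓ √(p₀(x)·p₁(x)))², one has (1/2)·(1 − √(1 − 4ξ(1−ξ)F)) ≤ ∑ₓ min(ξ·p₀(x), (1−ξ)·p₁(x)). (In particular 1 − 4ξ(1−ξ)F ≥ 0.) -/

import Mathlib

/-!
Absorb the priors into the weights `a = ξ p₀` and `b = (1 - ξ) p₁`, and let `e = ∑ min a b` be the
Bayes error. Since `a b = min a b * max a b`, the Cauchy–Schwarz inequality gives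
`(∑ √(a b))² ≤ e (1 - e)`, that is, `(1 - 2 e)² ≤ 1 - 4 (∑ √(a b))²`. It remains to take square
roots.
-/

section FiniteWeights

variable {ι : Type*} {s : Finset ι} {a b : ι → ℝ}

/-- The Bhattacharyya coefficient of two weights on a finite set, which need not be normalised. Its
square is the fidelity. -/
noncomputable def bhattacharyyaCoeff (s : Finset ι) (a b : ι → ℝ) : ℝ :=
  ∑ i ∈ s, √(a i * b i)

/-- The Bayes probability of error of a binary test between two hypotheses on a finite set. The
weights `a` and `b` are the likelihoods already multiplied by the priors. -/
noncomputable def bayesError (s : Finset ι) (a b : ι → ℝ) : ℝ :=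
  ∑ i ∈ s, min (a i) (b i)

theorem sq_bhattacharyyaCoeff_const_mul {c d : ℝ} (hcd : 0 ≤ c * d) :
    bhattacharyyaCoeff s (fun i => c * a i) (fun i => d * b i) ^ 2 =
      c * d * bhattacharyyaCoeff s a b ^ 2 := by
  simp only [bhattacharyyaCoeff, mul_mul_mul_comm c, Real.sqrt_mul hcd, ← Finset.mul_sum, mul_pow,
    Real.sq_sqrt hcd]

theorem bayesError_add_sum_max :
    bayesError s a b + ∑ i ∈ s, max (a i) (b i) = ∑ i ∈ s, a i + ∑ i ∈ s, b i := by
  simp only [bayesError, ← Finset.sum_add_distrib, min_add_max]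

theorem sq_bhattacharyyaCoeff_le_bayesError_mul_sum_max (ha : ∀ i ∈ s, 0 ≤ a i)
    (hb : ∀ i ∈ s, 0 ≤ b i) :
    bhattacharyyaCoeff s a b ^ 2 ≤ bayesError s a b * ∑ i ∈ s, max (a i) (b i) :=
  Finset.sum_sq_le_sum_mul_sum_of_sq_le_mul s (fun i hi => le_min (ha i hi) (hb i hi))
    (fun i hi => le_max_of_le_left (ha i hi)) fun i hi => by
      rw [Real.sq_sqrt (mul_nonneg (ha i hi) (hb i hi)), min_mul_max]

theorem sq_total_sub_two_mul_bayesError_le (ha : ∀ i ∈ s, 0 ≤ a i) (hb : ∀ i ∈ s, 0 ≤ b i) :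
    (∑ i ∈ s, a i + ∑ i ∈ s, b i - 2 * bayesError s a b) ^ 2 ≤
      (∑ i ∈ s, a i + ∑ i ∈ s, b i) ^ 2 - 4 * bhattacharyyaCoeff s a b ^ 2 := by
  rw [← bayesError_add_sum_max]
  linarith [sq_bhattacharyyaCoeff_le_bayesError_mul_sum_max ha hb]

theorem helstrom_le_bayes_general {p₀ p₁ : ι → ℝ} (h₀ : ∀ i ∈ s, 0 ≤ p₀ i)
    (h₁ : ∀ i ∈ s, 0 ≤ p₁ i) (hs₀ : ∑ i ∈ s, p₀ i = 1) (hs₁ : ∑ i ∈ s, p₁ i = 1)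
    {ξ : ℝ} (hξ : ξ ∈ Set.Icc (0 : ℝ) 1) :
    0 ≤ 1 - 4 * ξ * (1 - ξ) * bhattacharyyaCoeff s p₀ p₁ ^ 2 ∧
    (1 / 2) * (1 - √(1 - 4 * ξ * (1 - ξ) * bhattacharyyaCoeff s p₀ p₁ ^ 2)) ≤
      bayesError s (fun i => ξ * p₀ i) (fun i => (1 - ξ) * p₁ i) := by
  have hξ' : 0 ≤ 1 - ξ := sub_nonneg.2 hξ.2
  have htotal : ∑ i ∈ s, ξ * p₀ i + ∑ i ∈ s, (1 - ξ) * p₁ i = 1 := by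
    rw [← Finset.mul_sum, ← Finset.mul_sum, hs₀, hs₁]
    ring
  have hsq := sq_total_sub_two_mul_bayesError_le (fun i hi => mul_nonneg hξ.1 (h₀ i hi))
    (fun i hi => mul_nonneg hξ' (h₁ i hi))
  rw [htotal, one_pow, sq_bhattacharyyaCoeff_const_mul (mul_nonneg hξ.1 hξ'), ← mul_assoc,
    ← mul_assoc] at hsq
  refine ⟨(sq_nonneg _).trans hsq, ?_⟩
  linarith [Real.le_sqrt_of_sq_le hsq]

end FiniteWeights

open Finset in
/-- Finite-alphabet case: the Helstrom (vector) probability of error is at most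
the classical Bayes probability of error. -/
theorem helstrom_le_bayes (n : ℕ) (hn : 1 ≤ n) (p₀ p₁ : Fin n → ℝ)
    (h₀ : ∀ x, 0 ≤ p₀ x) (h₁ : ∀ x, 0 ≤ p₁ x)
    (hs₀ : ∑ x, p₀ x = 1) (hs₁ : ∑ x, p₁ x = 1)
    (ξ : ℝ) (hξ : ξ ∈ Set.Icc (0:ℝ) 1) :
    1 - 4 * ξ * (1 - ξ) * (∑ x, Real.sqrt (p₀ x * p₁ x))^2 ≥ 0 ∧
    (1/2) * (1 - Real.sqrt (1 - 4 * ξ * (1 - ξ) * (∑ x, Real.sqrt (p₀ x * p₁ x))^2)) ≤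
      ∑ x, min (ξ * p₀ x) ((1 - ξ) * p₁ x) :=
  helstrom_le_bayes_general (fun x _ => h₀ x) (fun x _ => h₁ x) hs₀ hs₁ hξ
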